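/- For every real number r > 0, the double integral 4·∫₀^r ∫₀^r sinh²(r₁)·sinh²(r₂)·sinh²((r₁−r₂)/2)·sinh²((r₁+r₂)/2) dr₁ dr₂ is at most 32·cosh²(r)·sinh⁴(r). -/

import Mathlib

open Real

/-!
By the product-to-sum formula, four times the integrand is the square of
`sinh x * sinh y * (cosh x - cosh y)`. On `[0, r]` every value of `cosh` lies in `[1, cosh r]`
and `sinh ≤ cosh`, so this square is at most `(cosh r - 1) ^ 2` times
`(sinh x * cosh x) * (sinh y * cosh y)`. The variables are now separated, and
`∫ x in 0..r, sinh x * cosh x = sinh r ^ 2 / 2`.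
-/

open MeasureTheory

lemma integral_integral_le_integral_mul_integral {α β : Type*}
    [MeasurableSpace α] [MeasurableSpace β] {μ : Measure α} {ν : Measure β}
    {f : α → β → ℝ} {g : α → ℝ} {h : β → ℝ}
    (hg : Integrable g μ) (hh : Integrable h ν)
    (f_nonneg : ∀ᵐ x ∂μ, ∀ᵐ y ∂ν, 0 ≤ f x y)
    (f_le : ∀ᵐ x ∂μ, ∀ᵐ y ∂ν, f x y ≤ g x * h y) :
    ∫ x, ∫ y, f x y ∂ν ∂μ ≤ (∫ x, g x ∂μ) * ∫ y, h y ∂ν := by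
  have inner_le : ∀ᵐ x ∂μ, ∫ y, f x y ∂ν ≤ g x * ∫ y, h y ∂ν := by
    filter_upwards [f_nonneg, f_le] with x hx_nonneg hx_le
    rw [← integral_const_mul]
    exact integral_mono_of_nonneg hx_nonneg (hh.const_mul _) hx_le
  rw [← integral_mul_const]
  exact integral_mono_of_nonneg (f_nonneg.mono fun x hx ↦ integral_nonneg_of_ae hx)
    (hg.mul_const _) inner_le

lemma integral_sinh_mul_cosh (a b : ℝ) :
    ∫ x in a..b, sinh x * cosh x = (sinh b ^ 2 - sinh a ^ 2) / 2 :=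
  (intervalIntegral.integral_comp_mul_deriv (fun x _ ↦ hasDerivAt_sinh x)
    continuous_cosh.continuousOn continuous_id).trans integral_id

lemma sinh_half_sub_mul_sinh_half_add (x y : ℝ) :
    sinh ((x - y) / 2) * sinh ((x + y) / 2) = (cosh x - cosh y) / 2 := by
  have cosh_x := cosh_add ((x + y) / 2) ((x - y) / 2)
  have cosh_y := cosh_sub ((x + y) / 2) ((x - y) / 2)
  ring_nf at cosh_x cosh_y ⊢
  linarith

lemma four_mul_sinh_sq_mul_sinh_half_sq (x y : ℝ) :
    4 * (sinh x ^ 2 * sinh y ^ 2 * sinh ((x - y) / 2) ^ 2 * sinh ((x + y) / 2) ^ 2) =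
      (sinh x * sinh y * (cosh x - cosh y)) ^ 2 := by
  rw [mul_assoc (sinh x ^ 2 * sinh y ^ 2), ← mul_pow (sinh ((x - y) / 2)),
    sinh_half_sub_mul_sinh_half_add]
  ring

lemma abs_cosh_sub_cosh_le {x y r : ℝ} (hx : |x| ≤ |r|) (hy : |y| ≤ |r|) :
    |cosh x - cosh y| ≤ cosh r - 1 :=
  abs_sub_le_of_le_of_le (one_le_cosh x) (cosh_le_cosh.2 hx) (one_le_cosh y) (cosh_le_cosh.2 hy)

lemma sinh_sq_le_sinh_mul_cosh {x : ℝ} (hx : 0 ≤ x) : sinh x ^ 2 ≤ sinh x * cosh x := by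
  rw [sq]
  exact mul_le_mul_of_nonneg_left (sinh_lt_cosh x).le (sinh_nonneg_iff.2 hx)

lemma sq_sinh_mul_sinh_mul_cosh_sub_cosh_le {x y r : ℝ} (hx : x ∈ Set.Icc 0 r)
    (hy : y ∈ Set.Icc 0 r) :
    (sinh x * sinh y * (cosh x - cosh y)) ^ 2 ≤
      (cosh r - 1) ^ 2 * (sinh x * cosh x) * (sinh y * cosh y) := by
  have cosh_diff : (cosh x - cosh y) ^ 2 ≤ (cosh r - 1) ^ 2 :=
    sq_le_sq.2 <| (abs_cosh_sub_cosh_le (abs_le_abs_of_nonneg hx.1 hx.2)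
      (abs_le_abs_of_nonneg hy.1 hy.2)).trans (le_abs_self _)
  have sinh_x := sinh_sq_le_sinh_mul_cosh hx.1
  have sinh_y := sinh_sq_le_sinh_mul_cosh hy.1
  have sinh_mul_cosh_nonneg : 0 ≤ sinh x * cosh x := (sq_nonneg _).trans sinh_x
  calc (sinh x * sinh y * (cosh x - cosh y)) ^ 2
      = (cosh x - cosh y) ^ 2 * sinh x ^ 2 * sinh y ^ 2 := by ring
    _ ≤ (cosh r - 1) ^ 2 * (sinh x * cosh x) * (sinh y * cosh y) := by gcongr

lemma integral_sq_sinh_mul_sinh_mul_cosh_sub_cosh_le {r : ℝ} (hr : 0 ≤ r) :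
    ∫ x in (0 : ℝ)..r, ∫ y in (0 : ℝ)..r, (sinh x * sinh y * (cosh x - cosh y)) ^ 2 ≤
      (cosh r - 1) ^ 2 * sinh r ^ 4 / 4 := by
  have integrable : IntervalIntegrable (fun x ↦ sinh x * cosh x) volume 0 r :=
    (continuous_sinh.mul continuous_cosh).intervalIntegrable 0 r
  have separated :
      ∫ x in (0 : ℝ)..r, ∫ y in (0 : ℝ)..r, (sinh x * sinh y * (cosh x - cosh y)) ^ 2 ≤
        (∫ x in (0 : ℝ)..r, (cosh r - 1) ^ 2 * (sinh x * cosh x)) *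
          ∫ y in (0 : ℝ)..r, sinh y * cosh y := by
    simp only [intervalIntegral.integral_of_le hr]
    refine integral_integral_le_integral_mul_integral (integrable.const_mul _).1 integrable.1
      (.of_forall fun x ↦ .of_forall fun y ↦ sq_nonneg _) ?_
    filter_upwards [ae_restrict_mem measurableSet_Ioc] with x hx
    filter_upwards [ae_restrict_mem measurableSet_Ioc] with y hy
    exact sq_sinh_mul_sinh_mul_cosh_sub_cosh_le (Set.Ioc_subset_Icc_self hx)
      (Set.Ioc_subset_Icc_self hy)
  rw [intervalIntegral.integral_const_mul, integral_sinh_mul_cosh, sinh_zero] at separated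
  linarith

/-- Proposition 1 (genus-2 volume bound): for every real `r > 0`, the double integral
`4·∫₀^r ∫₀^r sinh²(r₁)·sinh²(r₂)·sinh²((r₁−r₂)/2)·sinh²((r₁+r₂)/2) dr₁ dr₂`
is at most `32·cosh²(r)·sinh⁴(r)`. -/
theorem stmt_0 (r : ℝ) (hr : 0 < r) :
    4 * ∫ r₁ in (0:ℝ)..r, ∫ r₂ in (0:ℝ)..r,
        Real.sinh r₁ ^ 2 * Real.sinh r₂ ^ 2 *
          Real.sinh ((r₁ - r₂) / 2) ^ 2 * Real.sinh ((r₁ + r₂) / 2) ^ 2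
      ≤ 32 * Real.cosh r ^ 2 * Real.sinh r ^ 4 := by
  have cosh_sub_one_sq_le : (cosh r - 1) ^ 2 ≤ cosh r ^ 2 :=
    pow_le_pow_left₀ (sub_nonneg.2 (one_le_cosh r)) (sub_le_self _ zero_le_one) 2
  calc _ = ∫ x in (0 : ℝ)..r, ∫ y in (0 : ℝ)..r, (sinh x * sinh y * (cosh x - cosh y)) ^ 2 := by
        simp only [← intervalIntegral.integral_const_mul, four_mul_sinh_sq_mul_sinh_half_sq]
    _ ≤ (cosh r - 1) ^ 2 * sinh r ^ 4 / 4 :=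
        integral_sq_sinh_mul_sinh_mul_cosh_sub_cosh_le hr.le
    _ ≤ cosh r ^ 2 * sinh r ^ 4 / 4 := by gcongr
    _ ≤ 32 * cosh r ^ 2 * sinh r ^ 4 := by
        linarith [show 0 ≤ cosh r ^ 2 * sinh r ^ 4 by positivity]
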